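/- Let σ² > 0 and ε > 0 be real numbers. Then: (i) for every real P ≥ 0, if klDiv (gaussianReal 0 (P+σ²)) (gaussianReal 0 σ²) ≤ ENNReal.ofReal (2*ε²) then klDiv (gaussianReal 0 σ²) (gaussianReal 0 (P+σ²)) ≤ ENNReal.ofReal (2*ε²); consequently (ii) the set {P : ℝ | P ≥ 0 ∧ klDiv (gaussianReal 0 (P+σ²)) (gaussianReal 0 σ²) ≤ ENNReal.ofReal (2*ε²)} is a subset of {P : ℝ | P ≥ 0 ∧ klDiv (gaussianReal 0 σ²) (gaussianReal 0 (P+σ²)) ≤ ENNReal.ofReal (2*ε²)}, so the supremum of transmit powers feasible under the constraint D(p₀‖p₁) ≤ 2ε² is at least the supremum of transmit powers feasible under D(p₁‖p₀) ≤ 2ε². -/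

import Mathlib

open MeasureTheory ProbabilityTheory
open scoped ENNReal NNReal Classical

/-- Kullback–Leibler divergence of `μ` from `ν`: `∫ log (dμ/dν) dμ` when `μ ≪ ν` and the
log-likelihood ratio is `μ`-integrable, and `∞` otherwise. -/
noncomputable def klDiv {α : Type*} [MeasurableSpace α] (μ ν : Measure α) : ℝ≥0∞ :=
  if μ ≪ ν ∧ Integrable (llr μ ν) μ then ENNReal.ofReal (∫ x, llr μ ν x ∂μ) else ⊤

/-! Divergences between nondegenerate Gaussians have a closed form. When the means agree and `r ≥ 1`
is the ratio of the larger to the smaller variance, the divergence of the wider Gaussian from the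
narrower one exceeds the divergence in the opposite direction by `(r - r⁻¹) / 2 - log r`, that is,
by `sinh (log r) - log r ≥ 0`. A difference `d` of the means only widens this gap, since it
contributes `d ^ 2` divided by twice the variance of the second argument. -/

section LogLikelihoodRatio

variable {α : Type*} [MeasurableSpace α] {μ ν ξ : Measure α}

lemma ae_toReal_rnDeriv_pos [SigmaFinite μ] [μ.HaveLebesgueDecomposition ν] (hμν : μ ≪ ν) :
    ∀ᵐ x ∂μ, 0 < (μ.rnDeriv ν x).toReal := by
  filter_upwards [Measure.rnDeriv_pos hμν, hμν (Measure.rnDeriv_ne_top μ ν)] with x hpos htop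
  exact ENNReal.toReal_pos hpos.ne' htop

lemma llr_ae_eq_llr_sub_llr [SigmaFinite μ] [SigmaFinite ν] [SigmaFinite ξ]
    (hμν : μ ≪ ν) (hνξ : ν ≪ ξ) :
    llr μ ν =ᵐ[μ] fun x ↦ llr μ ξ x - llr ν ξ x := by
  filter_upwards [hμν.trans hνξ (Measure.rnDeriv_mul_rnDeriv hμν (κ := ξ)),
    ae_toReal_rnDeriv_pos hμν, hμν (ae_toReal_rnDeriv_pos hνξ)] with x hmul hμν_pos hνξ_pos
  simp only [llr, ← hmul, Pi.mul_apply, ENNReal.toReal_mul,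
    Real.log_mul hμν_pos.ne' hνξ_pos.ne', add_sub_cancel_right]

end LogLikelihoodRatio

section SecondMoment

variable {Ω : Type*} [MeasurableSpace Ω] {μ : Measure Ω} {X : Ω → ℝ}

lemma integrable_sub_const_sq [IsFiniteMeasure μ] (hX : MemLp X 2 μ) (c : ℝ) :
    Integrable (fun ω ↦ (X ω - c) ^ 2) μ :=
  (hX.sub (memLp_const c)).integrable_sq

lemma integral_sub_const_sq [IsProbabilityMeasure μ] (hX : MemLp X 2 μ) (c : ℝ) :
    ∫ ω, (X ω - c) ^ 2 ∂μ = Var[X; μ] + (μ[X] - c) ^ 2 := by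
  have hmean : ∫ ω, X ω - c ∂μ = μ[X] - c := by
    simp [integral_sub (hX.integrable one_le_two) (integrable_const c)]
  have hvar : Var[X; μ] = ∫ ω, (X ω - c) ^ 2 ∂μ - (∫ ω, X ω - c ∂μ) ^ 2 :=
    (variance_sub_const hX.aestronglyMeasurable c).symm.trans
      (variance_eq_sub (hX.sub (memLp_const c)))
  rw [hvar, hmean, sub_add_cancel]

end SecondMoment

lemma two_mul_log_le_sub_inv {r : ℝ} (hr : 1 ≤ r) : 2 * Real.log r ≤ r - r⁻¹ := by
  have h : Real.log r ≤ Real.sinh (Real.log r) := Real.self_le_sinh_iff.2 (Real.log_nonneg hr)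
  rw [Real.sinh_log (by positivity)] at h
  linarith

lemma log_gaussianPDFReal (m : ℝ) {v : ℝ≥0} (hv : v ≠ 0) (x : ℝ) :
    Real.log (gaussianPDFReal m v x) =
      -(Real.log (2 * Real.pi) + Real.log v) / 2 - (x - m) ^ 2 / (2 * v) := by
  rw [gaussianPDFReal, Real.log_mul (by positivity) (by positivity), Real.log_inv,
    Real.log_sqrt (by positivity), Real.log_exp, Real.log_mul (by positivity) (by positivity)]
  ring

lemma llr_gaussianReal_volume (m : ℝ) (v : ℝ≥0) :
    llr (gaussianReal m v) volume =ᵐ[volume] fun x ↦ Real.log (gaussianPDFReal m v x) := by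
  filter_upwards [rnDeriv_gaussianReal m v] with x hx
  rw [llr, hx, toReal_gaussianPDF]

lemma integrable_sub_const_sq_gaussianReal (m : ℝ) (v : ℝ≥0) (c : ℝ) :
    Integrable (fun x ↦ (x - c) ^ 2) (gaussianReal m v) :=
  integrable_sub_const_sq (memLp_id_gaussianReal 2) c

lemma integral_sub_const_sq_gaussianReal (m : ℝ) (v : ℝ≥0) (c : ℝ) :
    ∫ x, (x - c) ^ 2 ∂gaussianReal m v = v + (m - c) ^ 2 := by
  simpa using integral_sub_const_sq (memLp_id_gaussianReal (μ := m) (v := v) 2) c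

section GaussianPair

variable (m₁ m₂ : ℝ) {v₁ v₂ : ℝ≥0}

lemma gaussianReal_absolutelyContinuous_gaussianReal (hv₁ : v₁ ≠ 0) (hv₂ : v₂ ≠ 0) :
    gaussianReal m₁ v₁ ≪ gaussianReal m₂ v₂ :=
  (gaussianReal_absolutelyContinuous m₁ hv₁).trans (gaussianReal_absolutelyContinuous' m₂ hv₂)

lemma llr_gaussianReal_gaussianReal (hv₁ : v₁ ≠ 0) (hv₂ : v₂ ≠ 0) :
    llr (gaussianReal m₁ v₁) (gaussianReal m₂ v₂) =ᵐ[gaussianReal m₁ v₁]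
      fun x ↦ Real.log (v₂ / v₁) / 2 + (x - m₂) ^ 2 / (2 * v₂) - (x - m₁) ^ 2 / (2 * v₁) := by
  have hvol := gaussianReal_absolutelyContinuous m₁ hv₁
  filter_upwards [llr_ae_eq_llr_sub_llr
      (gaussianReal_absolutelyContinuous_gaussianReal m₁ m₂ hv₁ hv₂)
      (gaussianReal_absolutelyContinuous m₂ hv₂),
    hvol (llr_gaussianReal_volume m₁ v₁), hvol (llr_gaussianReal_volume m₂ v₂)] with x h h₁ h₂
  rw [h, h₁, h₂, log_gaussianPDFReal m₁ hv₁, log_gaussianPDFReal m₂ hv₂,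
    Real.log_div (by exact_mod_cast hv₂) (by exact_mod_cast hv₁)]
  ring

lemma integrable_llr_gaussianReal (hv₁ : v₁ ≠ 0) (hv₂ : v₂ ≠ 0) :
    Integrable (llr (gaussianReal m₁ v₁) (gaussianReal m₂ v₂)) (gaussianReal m₁ v₁) :=
  (((integrable_const _).add ((integrable_sub_const_sq_gaussianReal m₁ v₁ m₂).div_const _)).sub
    ((integrable_sub_const_sq_gaussianReal m₁ v₁ m₁).div_const _)).congr
    (llr_gaussianReal_gaussianReal m₁ m₂ hv₁ hv₂).symm

lemma integral_llr_gaussianReal (hv₁ : v₁ ≠ 0) (hv₂ : v₂ ≠ 0) :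
    ∫ x, llr (gaussianReal m₁ v₁) (gaussianReal m₂ v₂) x ∂gaussianReal m₁ v₁ =
      (Real.log (v₂ / v₁) + (v₁ + (m₁ - m₂) ^ 2) / v₂ - 1) / 2 := by
  have hsq₁ := (integrable_sub_const_sq_gaussianReal m₁ v₁ m₁).div_const (2 * (v₁ : ℝ))
  have hsq₂ := (integrable_sub_const_sq_gaussianReal m₁ v₁ m₂).div_const (2 * (v₂ : ℝ))
  have hlog : Integrable (fun _ ↦ Real.log (v₂ / v₁) / 2) (gaussianReal m₁ v₁) :=
    integrable_const _
  have hv₁_ne : (v₁ : ℝ) ≠ 0 := by exact_mod_cast hv₁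
  rw [integral_congr_ae (llr_gaussianReal_gaussianReal m₁ m₂ hv₁ hv₂),
    integral_sub (hlog.fun_add hsq₂) hsq₁, integral_add hlog hsq₂,
    integral_const, probReal_univ, one_smul, integral_div, integral_div,
    integral_sub_const_sq_gaussianReal, integral_sub_const_sq_gaussianReal]
  field_simp
  ring

lemma klDiv_gaussianReal_gaussianReal (hv₁ : v₁ ≠ 0) (hv₂ : v₂ ≠ 0) :
    klDiv (gaussianReal m₁ v₁) (gaussianReal m₂ v₂) =
      ENNReal.ofReal ((Real.log (v₂ / v₁) + (v₁ + (m₁ - m₂) ^ 2) / v₂ - 1) / 2) := by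
  rw [klDiv, if_pos ⟨gaussianReal_absolutelyContinuous_gaussianReal m₁ m₂ hv₁ hv₂,
    integrable_llr_gaussianReal m₁ m₂ hv₁ hv₂⟩, integral_llr_gaussianReal m₁ m₂ hv₁ hv₂]

lemma klDiv_gaussianReal_le_klDiv_swap (hv₁ : v₁ ≠ 0) (hv : v₁ ≤ v₂) :
    klDiv (gaussianReal m₁ v₁) (gaussianReal m₂ v₂) ≤
      klDiv (gaussianReal m₂ v₂) (gaussianReal m₁ v₁) := by
  have hv₂ : v₂ ≠ 0 := (hv₁.pos.trans_le hv).ne'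
  have hv₁_pos : (0 : ℝ) < v₁ := by positivity
  have hle : (v₁ : ℝ) ≤ v₂ := by exact_mod_cast hv
  have hlog : 2 * Real.log (v₂ / v₁) ≤ v₂ / v₁ - v₁ / v₂ := by
    simpa only [inv_div] using two_mul_log_le_sub_inv ((one_le_div hv₁_pos).2 hle)
  have hlog_swap : Real.log (v₁ / v₂) = -Real.log (v₂ / v₁) := by rw [← Real.log_inv, inv_div]
  have hmean : (m₁ - m₂) ^ 2 / v₂ ≤ (m₂ - m₁) ^ 2 / v₁ := by
    rw [sub_sq_comm m₁ m₂]
    gcongr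
  rw [klDiv_gaussianReal_gaussianReal m₁ m₂ hv₁ hv₂, klDiv_gaussianReal_gaussianReal m₂ m₁ hv₂ hv₁]
  apply ENNReal.ofReal_le_ofReal
  rw [hlog_swap, add_div, add_div (v₂ : ℝ)]
  linarith

end GaussianPair

/-- Corollary 1: any transmit power feasible under `D(p₁‖p₀) ≤ 2ε²` is also feasible
under `D(p₀‖p₁) ≤ 2ε²`. -/
theorem stmt_10 (σ2 : ℝ≥0) (hσ : 0 < σ2) (ε : ℝ) (hε : 0 < ε) :
    (∀ P : ℝ≥0,
      klDiv (gaussianReal 0 (P + σ2)) (gaussianReal 0 σ2) ≤ ENNReal.ofReal (2 * ε ^ 2) →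
        klDiv (gaussianReal 0 σ2) (gaussianReal 0 (P + σ2)) ≤ ENNReal.ofReal (2 * ε ^ 2)) ∧
    {P : ℝ≥0 |
        klDiv (gaussianReal 0 (P + σ2)) (gaussianReal 0 σ2) ≤ ENNReal.ofReal (2 * ε ^ 2)} ⊆
      {P : ℝ≥0 |
        klDiv (gaussianReal 0 σ2) (gaussianReal 0 (P + σ2)) ≤ ENNReal.ofReal (2 * ε ^ 2)} := by
  have hfeasible (P : ℝ≥0)
      (hP : klDiv (gaussianReal 0 (P + σ2)) (gaussianReal 0 σ2) ≤ ENNReal.ofReal (2 * ε ^ 2)) :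
      klDiv (gaussianReal 0 σ2) (gaussianReal 0 (P + σ2)) ≤ ENNReal.ofReal (2 * ε ^ 2) :=
    (klDiv_gaussianReal_le_klDiv_swap 0 0 hσ.ne' le_add_self).trans hP
  exact ⟨hfeasible, hfeasible⟩
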